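/- Suppose Assumptions A1 and A3 hold with slackness δ > 0, V > 0, all initial queue backlogs are zero, and a C(t)-approximate policy is run with C(t) ≤ C + Vε_V + Σ_l Z_l(t)ε_Z + Σ_k Q_k(t)ε_Q + Σ_m |H_m(t)|ε_H, where the nonnegative constants satisfy ε_Q < δ, ε_H < δ, and ε_Z + ε_H Σ_{m=1}^M β_{l,m} < δ for all l ∈ {1,…,L}. Then for every slot t ≥ 0 and all l, k, m: Q_k(t) ≤ VC₃/θ, Z_l(t) ≤ VC₃/θ, and |H_m(t)| ≤ VC₃/θ, where θ = min[δ − ε_Q, δ − ε_H, (δ − ε_Z − ε_H β_sum)/(1 + β_sum)] with β_sum = max_l Σ_m β_{l,m}, C₃ = √(D₁ + D₂ + D₃), D₁ = [(B+C)/V + (y₀^max − y₀^min) + (f^max − f^min) + ε_V]², D₂ = 2Dθ²/V², D₃ = (2 z_max θ/V)√D₁, and z_max is the maximum over all constants z_l^diff, q_k^diff, h_m^diff. -/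

import Mathlib

/-- The "drift-plus-penalty" expression `E_t(α,γ)` whose (approximate) per-slot
minimization defines the universal scheduling algorithm. -/
noncomputable def driftExpr {Act Ω : Type*} {K M L : ℕ}
    (ahat bhat : Fin K → Act → Ω → ℝ) (xhat : Fin M → Act → Ω → ℝ)
    (y0hat : Act → Ω → ℝ) (yhat : Fin L → Act → Ω → ℝ)
    (g : Fin L → (Fin M → ℝ) → ℝ) (f : (Fin M → ℝ) → ℝ) (V : ℝ)
    (w : Ω) (Zv : Fin L → ℝ) (Qv : Fin K → ℝ) (Hv : Fin M → ℝ)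
    (a : Act) (γ : Fin M → ℝ) : ℝ :=
  V * y0hat a w + V * f γ
    + ∑ l, Zv l * (yhat l a w + g l γ)
    + ∑ k, Qv k * (ahat k a w - bhat k a w)
    + ∑ m, Hv m * (γ m - xhat m a w)

/-- Quadratic bound on one step of the `Q` recursion (linear-drift form). -/
lemma q_drift (q a b : ℝ) (hq : 0 ≤ q) (ha : 0 ≤ a) (hb : 0 ≤ b) :
    (max (q - b) 0 + a) ^ 2 ≤ q ^ 2 + (b ^ 2 + a ^ 2) + 2 * (q * (a - b)) := by
  rcases le_total (q - b) 0 with h | h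
  · rw [max_eq_right h]; nlinarith [sq_nonneg (q - b), mul_nonneg hq ha]
  · rw [max_eq_left h]; nlinarith [mul_nonneg ha hb]

/-- Quadratic bound on one step of the `Z` recursion (linear-drift form). -/
lemma z_drift (z d : ℝ) : (max (z + d) 0) ^ 2 ≤ z ^ 2 + d ^ 2 + 2 * (z * d) := by
  rcases le_total (z + d) 0 with h | h
  · rw [max_eq_right h]; nlinarith [sq_nonneg (z + d)]
  · rw [max_eq_left h]; nlinarith

lemma q_step (q a b w z : ℝ) (hq : 0 ≤ q) (ha : 0 ≤ a) (hb : 0 ≤ b)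
    (hw : max b a ≤ w) (hz : w ≤ z) :
    (max (q - b) 0 + a) ^ 2 ≤ q ^ 2 + w * max b a + 2 * (z * q) := by
  have h1 : b ≤ max b a := le_max_left _ _
  have h2 : a ≤ max b a := le_max_right _ _
  generalize max b a = c at *
  have hc : 0 ≤ c := hb.trans h1
  have h3 : max (q - b) 0 + a ≤ q + c := by
    have : max (q - b) 0 ≤ q := max_le (by linarith) hq
    linarith
  have h4 : 0 ≤ max (q - b) 0 + a := add_nonneg (le_max_right _ _) ha
  have h5 : (max (q - b) 0 + a) ^ 2 ≤ (q + c) ^ 2 := pow_le_pow_left₀ h4 h3 2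
  nlinarith [mul_le_mul_of_nonneg_right hw hc, mul_le_mul_of_nonneg_right (hw.trans hz) hq]

lemma z_step (q d w z : ℝ) (hq : 0 ≤ q) (hw : |d| ≤ w) (hz : w ≤ z) :
    (max (q + d) 0) ^ 2 ≤ q ^ 2 + w * |d| + 2 * (z * q) := by
  have h0 := abs_nonneg d
  have h1 := le_abs_self d
  have h2 := sq_abs d
  have := z_drift q d
  nlinarith [mul_le_mul_of_nonneg_right hw h0, mul_le_mul_of_nonneg_right (hw.trans hz) hq,
    mul_le_mul_of_nonneg_right h1 hq]

lemma h_step (q d w z : ℝ) (hw : |d| ≤ w) (hz : w ≤ z) :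
    (q + d) ^ 2 ≤ q ^ 2 + 2 * (w * |d|) + 2 * (z * |q|) := by
  have h0 := abs_nonneg d
  have hq := abs_nonneg q
  have h2 := sq_abs d
  have h3 : q * d ≤ |d| * |q| := by rw [mul_comm, ← abs_mul]; exact le_abs_self _
  nlinarith [mul_le_mul_of_nonneg_right hw h0, mul_le_mul_of_nonneg_right (hw.trans hz) hq,
    mul_nonneg (h0.trans hw) h0]

lemma sum_sq_le {n : ℕ} (u : Fin n → ℝ) (hu : ∀ i, 0 ≤ u i) : ∑ i, u i ^ 2 ≤ (∑ i, u i) ^ 2 :=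
  Finset.sum_sq_le_sq_sum_of_nonneg (fun i _ => hu i)

lemma le_of_sq_le_sq_aux {a b : ℝ} (h : a ^ 2 ≤ b ^ 2) (hb : 0 ≤ b) : a ≤ b :=
  (le_abs_self a).trans (abs_le_of_sq_le_sq h hb)

/-- Theorem 2(a): under Assumptions A1 and A3 (Slater slackness `δ`), a
`C(t)`-approximate policy with `C(t) ≤ C + Vε_V + Σ_l Z_l(t)ε_Z + Σ_k Q_k(t)ε_Q
 + Σ_m |H_m(t)|ε_H`, started from empty queues, keeps all queues deterministically
bounded: `Q_k(t), Z_l(t), |H_m(t)| ≤ VC₃/θ` for all `t`. -/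
theorem stmt_7
    {Ω Act : Type*} (ω : ℕ → Ω) (A : Ω → Set Act) (hAne : ∀ w, (A w).Nonempty)
    (K M L : ℕ) (hK : 0 < K) (hM : 0 < M) (hL : 0 < L)
    (ahat bhat : Fin K → Act → Ω → ℝ) (xhat : Fin M → Act → Ω → ℝ)
    (y0hat : Act → Ω → ℝ) (yhat : Fin L → Act → Ω → ℝ)
    (amax bmax : Fin K → ℝ) (xmin xmax : Fin M → ℝ)
    (y0min y0max : ℝ) (ymin ymax : Fin L → ℝ)
    -- Assumption A1 (boundedness)
    (hA1a : ∀ (w : Ω) (a' : Act), a' ∈ A w → ∀ k, 0 ≤ ahat k a' w ∧ ahat k a' w ≤ amax k)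
    (hA1b : ∀ (w : Ω) (a' : Act), a' ∈ A w → ∀ k, 0 ≤ bhat k a' w ∧ bhat k a' w ≤ bmax k)
    (hA1x : ∀ (w : Ω) (a' : Act), a' ∈ A w → ∀ m, xmin m ≤ xhat m a' w ∧ xhat m a' w ≤ xmax m)
    (hA1y0 : ∀ (w : Ω) (a' : Act), a' ∈ A w → y0min ≤ y0hat a' w ∧ y0hat a' w ≤ y0max)
    (hA1y : ∀ (w : Ω) (a' : Act), a' ∈ A w → ∀ l, ymin l ≤ yhat l a' w ∧ yhat l a' w ≤ ymax l)
    -- the convex set X and the cost functions f, g_l on the box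
    (X : Set (Fin M → ℝ)) (hX : Convex ℝ X)
    (f : (Fin M → ℝ) → ℝ) (g : Fin L → (Fin M → ℝ) → ℝ)
    (fmin fmax : ℝ) (gmin gmax : Fin L → ℝ) (β : Fin L → Fin M → ℝ)
    (hβ : ∀ l m, 0 ≤ β l m)
    (hfconv : ConvexOn ℝ {x : Fin M → ℝ | ∀ m, xmin m ≤ x m ∧ x m ≤ xmax m} f)
    (hfcont : ContinuousOn f {x : Fin M → ℝ | ∀ m, xmin m ≤ x m ∧ x m ≤ xmax m})
    (hfbd : ∀ x ∈ {x : Fin M → ℝ | ∀ m, xmin m ≤ x m ∧ x m ≤ xmax m},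
      fmin ≤ f x ∧ f x ≤ fmax)
    (hgconv : ∀ l, ConvexOn ℝ {x : Fin M → ℝ | ∀ m, xmin m ≤ x m ∧ x m ≤ xmax m} (g l))
    (hgcont : ∀ l, ContinuousOn (g l) {x : Fin M → ℝ | ∀ m, xmin m ≤ x m ∧ x m ≤ xmax m})
    (hgbd : ∀ l, ∀ x ∈ {x : Fin M → ℝ | ∀ m, xmin m ≤ x m ∧ x m ≤ xmax m},
      gmin l ≤ g l x ∧ g l x ≤ gmax l)
    (hglip : ∀ (l : Fin L) (x y : Fin M → ℝ),
      (∀ m, xmin m ≤ x m ∧ x m ≤ xmax m) →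
      (∀ m, xmin m ≤ x m + y m ∧ x m + y m ≤ xmax m) →
      g l (x + y) ≤ g l x + ∑ m, β l m * |y m|)
    -- Assumption A3 (Slater condition with slackness δ)
    (δ : ℝ) (hδ : 0 < δ)
    (hA3 : ∀ t, ∃ a' ∈ A (ω t),
      (∀ l, yhat l a' (ω t) + g l (fun m => xhat m a' (ω t)) ≤ -δ) ∧
      (∀ k, ahat k a' (ω t) ≤ bhat k a' (ω t) - δ) ∧
      (∀ ε : Fin M → ℝ, (∀ m, |ε m| ≤ δ) →
        ((fun m => xhat m a' (ω t)) + ε) ∈ X) ∧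
      (∀ m, xmin m + δ ≤ xhat m a' (ω t) ∧ xhat m a' (ω t) ≤ xmax m - δ))
    -- parameters and the constants B and D
    (V C B D : ℝ) (hV : 0 < V) (hC : 0 ≤ C)
    (hB : ∀ (t : ℕ) (a' : Act) (γ' : Fin M → ℝ), a' ∈ A (ω t) → γ' ∈ X →
      (∀ m, xmin m ≤ γ' m ∧ γ' m ≤ xmax m) →
      (1 / 2) * ∑ l, (yhat l a' (ω t) + g l γ') ^ 2
        + (1 / 2) * ∑ k, ((bhat k a' (ω t)) ^ 2 + (ahat k a' (ω t)) ^ 2)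
        + (1 / 2) * ∑ m, (γ' m - xhat m a' (ω t)) ^ 2 ≤ B)
    (hD : ∀ (t : ℕ) (a' : Act) (γ' : Fin M → ℝ), a' ∈ A (ω t) → γ' ∈ X →
      (∀ m, xmin m ≤ γ' m ∧ γ' m ≤ xmax m) →
      (1 / 2) * ∑ l, max (|ymax l + gmax l|) (|ymin l + gmin l|)
          * |yhat l a' (ω t) + g l γ'|
        + ∑ m, (xmax m - xmin m) * |xhat m a' (ω t) - γ' m|
        + (1 / 2) * ∑ k, max (bmax k) (amax k)
          * max (bhat k a' (ω t)) (ahat k a' (ω t)) ≤ D)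
    -- approximation error constants
    (εV εZ εQ εH : ℝ) (hεV : 0 ≤ εV) (hεZ : 0 ≤ εZ) (hεQ : 0 ≤ εQ) (hεH : 0 ≤ εH)
    (hεQδ : εQ < δ) (hεHδ : εH < δ)
    (hεZδ : ∀ l, εZ + εH * ∑ m, β l m < δ)
    -- the C(t)-approximate policy and the queues (initially empty)
    (α : ℕ → Act) (γ : ℕ → Fin M → ℝ)
    (hα : ∀ t, α t ∈ A (ω t)) (hγX : ∀ t, γ t ∈ X)
    (hγbox : ∀ t m, xmin m ≤ γ t m ∧ γ t m ≤ xmax m)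
    (Q : Fin K → ℕ → ℝ) (Z : Fin L → ℕ → ℝ) (H : Fin M → ℕ → ℝ)
    (hQ0 : ∀ k, Q k 0 = 0) (hZ0 : ∀ l, Z l 0 = 0) (hH0 : ∀ m, H m 0 = 0)
    (hQ : ∀ k t, Q k (t + 1) = max (Q k t - bhat k (α t) (ω t)) 0 + ahat k (α t) (ω t))
    (hZ : ∀ l t, Z l (t + 1) = max (Z l t + yhat l (α t) (ω t) + g l (γ t)) 0)
    (hH : ∀ m t, H m (t + 1) = H m t + γ t m - xhat m (α t) (ω t))
    (Ct : ℕ → ℝ)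
    (hCt : ∀ t, Ct t ≤ C + V * εV + (∑ l, Z l t * εZ) + (∑ k, Q k t * εQ)
        + (∑ m, |H m t| * εH))
    (hCapprox : ∀ (t : ℕ) (a' : Act) (γ' : Fin M → ℝ), a' ∈ A (ω t) → γ' ∈ X →
      (∀ m, xmin m ≤ γ' m ∧ γ' m ≤ xmax m) →
      driftExpr ahat bhat xhat y0hat yhat g f V (ω t)
          (fun l => Z l t) (fun k => Q k t) (fun m => H m t) (α t) (γ t)
        ≤ driftExpr ahat bhat xhat y0hat yhat g f V (ω t)
          (fun l => Z l t) (fun k => Q k t) (fun m => H m t) a' γ' + Ct t)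
    -- derived constants
    (βsum : ℝ) (hβsum : IsGreatest {x : ℝ | ∃ l, x = ∑ m, β l m} βsum)
    (zmax : ℝ)
    (hzmax : IsGreatest {x : ℝ |
        (∃ l, x = max (|ymax l + gmax l|) (|ymin l + gmin l|)) ∨
        (∃ k, x = max (bmax k) (amax k)) ∨
        (∃ m, x = xmax m - xmin m)} zmax)
    (θ : ℝ)
    (hθ : θ = min (δ - εQ) (min (δ - εH) ((δ - εZ - εH * βsum) / (1 + βsum))))
    (D₁ D₂ D₃ C₃ : ℝ)
    (hD₁ : D₁ = ((B + C) / V + (y0max - y0min) + (fmax - fmin) + εV) ^ 2)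
    (hD₂ : D₂ = 2 * D * θ ^ 2 / V ^ 2)
    (hD₃ : D₃ = 2 * zmax * θ / V * Real.sqrt D₁)
    (hC₃ : C₃ = Real.sqrt (D₁ + D₂ + D₃)) :
    ∀ t : ℕ,
      (∀ k, Q k t ≤ V * C₃ / θ) ∧
      (∀ l, Z l t ≤ V * C₃ / θ) ∧
      (∀ m, |H m t| ≤ V * C₃ / θ) := by
  obtain ⟨l0, hl0⟩ := hβsum.1
  have hβle : ∀ l, ∑ m, β l m ≤ βsum := fun l => hβsum.2 ⟨l, rfl⟩
  have hβ0 : 0 ≤ βsum := by rw [hl0]; exact Finset.sum_nonneg fun m _ => hβ l0 m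
  have hθQ : θ ≤ δ - εQ := by rw [hθ]; exact min_le_left _ _
  have hθH : θ ≤ δ - εH := by rw [hθ]; exact (min_le_right _ _).trans (min_le_left _ _)
  have hθZ : θ * (1 + βsum) ≤ δ - εZ - εH * βsum := by
    rw [← le_div_iff₀ (by linarith), hθ]; exact (min_le_right _ _).trans (min_le_right _ _)
  have hθ0 : 0 < θ := by
    rw [hθ]
    refine lt_min (by linarith) (lt_min (by linarith) (div_pos ?_ (by linarith)))
    have := hεZδ l0
    rw [← hl0] at this; linarith
  have hzl : ∀ l, max (|ymax l + gmax l|) (|ymin l + gmin l|) ≤ zmax :=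
    fun l => hzmax.2 (Or.inl ⟨l, rfl⟩)
  have hzk : ∀ k, max (bmax k) (amax k) ≤ zmax := fun k => hzmax.2 (Or.inr (Or.inl ⟨k, rfl⟩))
  have hzm : ∀ m, xmax m - xmin m ≤ zmax := fun m => hzmax.2 (Or.inr (Or.inr ⟨m, rfl⟩))
  have hz0 : 0 ≤ zmax := (abs_nonneg _).trans ((le_max_left _ _).trans (hzl l0))
  have hB0 : 0 ≤ B := by
    refine le_trans ?_ (hB 0 _ _ (hα 0) (hγX 0) (hγbox 0))
    positivity
  have hdm : ∀ t m, |xhat m (α t) (ω t) - γ t m| ≤ xmax m - xmin m := by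
    intro t m
    have h1 := hA1x _ _ (hα t) m
    have h2 := hγbox t m
    rw [abs_le]; constructor <;> linarith [h1.1, h1.2, h2.1, h2.2]
  have hdl : ∀ t l, |yhat l (α t) (ω t) + g l (γ t)|
      ≤ max (|ymax l + gmax l|) (|ymin l + gmin l|) := by
    intro t l
    have h1 := hA1y _ _ (hα t) l
    have h2 := hgbd l _ (hγbox t)
    rw [abs_le]
    constructor
    · have := (neg_abs_le (ymin l + gmin l))
      have := le_max_right (|ymax l + gmax l|) (|ymin l + gmin l|)
      linarith [h1.1, h2.1]
    · have := (le_abs_self (ymax l + gmax l))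
      have := le_max_left (|ymax l + gmax l|) (|ymin l + gmin l|)
      linarith [h1.2, h2.2]
  have hdk : ∀ t k, max (bhat k (α t) (ω t)) (ahat k (α t) (ω t)) ≤ max (bmax k) (amax k) :=
    fun t k => max_le_max (hA1b _ _ (hα t) k).2 (hA1a _ _ (hα t) k).2
  have hD0 : 0 ≤ D := by
    refine le_trans ?_ (hD 0 _ _ (hα 0) (hγX 0) (hγbox 0))
    have e1 : 0 ≤ ∑ l, max (|ymax l + gmax l|) (|ymin l + gmin l|)
          * |yhat l (α 0) (ω 0) + g l (γ 0)| :=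
      Finset.sum_nonneg fun l _ => mul_nonneg ((abs_nonneg _).trans (hdl 0 l)) (abs_nonneg _)
    have e2 : 0 ≤ ∑ m, (xmax m - xmin m) * |xhat m (α 0) (ω 0) - γ 0 m| :=
      Finset.sum_nonneg fun m _ => mul_nonneg ((abs_nonneg _).trans (hdm 0 m)) (abs_nonneg _)
    have e3 : 0 ≤ ∑ k, max (bmax k) (amax k)
          * max (bhat k (α 0) (ω 0)) (ahat k (α 0) (ω 0)) :=
      Finset.sum_nonneg fun k _ => by
        have h := (hA1b _ _ (hα 0) k).1.trans (le_max_left _ (ahat k (α 0) (ω 0)))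
        exact mul_nonneg (h.trans (hdk 0 k)) h
    linarith
  have hy0 := hA1y0 _ _ (hα 0)
  have hf0 := hfbd _ (hγbox 0)
  set c : ℝ := (B + C) / V + (y0max - y0min) + (fmax - fmin) + εV with hc
  have hc0 : 0 ≤ c := by
    have : 0 ≤ (B + C) / V := by positivity
    linarith [hy0.1, hy0.2, hf0.1, hf0.2]
  have hVc : V * c = B + C + V * (y0max - y0min) + V * (fmax - fmin) + V * εV := by
    rw [hc]; field_simp
  have hsq : Real.sqrt D₁ = c := by rw [hD₁]; exact Real.sqrt_sq hc0
  have hQn : ∀ k t, 0 ≤ Q k t := by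
    intro k t
    cases t with
    | zero => rw [hQ0]
    | succ t => rw [hQ]; exact add_nonneg (le_max_right _ _) (hA1a _ _ (hα t) k).1
  have hZn : ∀ l t, 0 ≤ Z l t := by
    intro l t
    cases t with
    | zero => rw [hZ0]
    | succ t => rw [hZ]; exact le_max_right _ _
  -- drift bound
  have drift : ∀ t, (∑ l, Z l (t+1) ^ 2) + (∑ k, Q k (t+1) ^ 2) + (∑ m, H m (t+1) ^ 2)
      ≤ (∑ l, Z l t ^ 2) + (∑ k, Q k t ^ 2) + (∑ m, H m t ^ 2)
        + 2 * (V * c - θ * ((∑ l, Z l t) + (∑ k, Q k t) + (∑ m, |H m t|))) := by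
    intro t
    have e1 : (∑ l, Z l (t+1) ^ 2) ≤ (∑ l, Z l t ^ 2)
        + (∑ l, (yhat l (α t) (ω t) + g l (γ t)) ^ 2)
        + 2 * ∑ l, Z l t * (yhat l (α t) (ω t) + g l (γ t)) := by
      rw [Finset.mul_sum, ← Finset.sum_add_distrib, ← Finset.sum_add_distrib]
      refine Finset.sum_le_sum fun l _ => ?_
      rw [hZ, add_assoc]; exact z_drift _ _
    have e2 : (∑ k, Q k (t+1) ^ 2) ≤ (∑ k, Q k t ^ 2)
        + (∑ k, ((bhat k (α t) (ω t)) ^ 2 + (ahat k (α t) (ω t)) ^ 2))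
        + 2 * ∑ k, Q k t * (ahat k (α t) (ω t) - bhat k (α t) (ω t)) := by
      rw [Finset.mul_sum, ← Finset.sum_add_distrib, ← Finset.sum_add_distrib]
      refine Finset.sum_le_sum fun k _ => ?_
      rw [hQ]
      exact q_drift _ _ _ (hQn k t) (hA1a _ _ (hα t) k).1 (hA1b _ _ (hα t) k).1
    have e3 : (∑ m, H m (t+1) ^ 2) ≤ (∑ m, H m t ^ 2)
        + (∑ m, (γ t m - xhat m (α t) (ω t)) ^ 2)
        + 2 * ∑ m, H m t * (γ t m - xhat m (α t) (ω t)) := by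
      rw [Finset.mul_sum, ← Finset.sum_add_distrib, ← Finset.sum_add_distrib]
      refine Finset.sum_le_sum fun m _ => ?_
      rw [hH]; apply le_of_eq; ring
    have e4 := hB t _ _ (hα t) (hγX t) (hγbox t)
    obtain ⟨a', ha', hs1, hs2, hs3, hs4⟩ := hA3 t
    set s : ℝ := θ + εH with hs
    have hs0 : 0 ≤ s := by linarith
    have hsδ : s ≤ δ := by linarith
    let ε : Fin M → ℝ := fun m => if 0 ≤ H m t then -s else s
    have hε : ∀ m, |ε m| = s := by
      intro m
      simp only [ε]; split_ifs
      · rw [abs_neg, abs_of_nonneg hs0]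
      · rw [abs_of_nonneg hs0]
    have hεδ : ∀ m, |ε m| ≤ δ := fun m => (hε m).le.trans hsδ
    have hHε : ∀ m, H m t * ε m = -(s * |H m t|) := by
      intro m
      simp only [ε]; split_ifs with h
      · rw [abs_of_nonneg h]; ring
      · rw [abs_of_neg (not_le.mp h)]; ring
    have hxb : ∀ m, xmin m ≤ xhat m a' (ω t) + ε m ∧ xhat m a' (ω t) + ε m ≤ xmax m := by
      intro m
      have h1 := abs_le.mp (hεδ m)
      have h2 := hs4 m
      constructor <;> linarith [h1.1, h1.2, h2.1, h2.2]
    have e5 := hCapprox t a' ((fun m => xhat m a' (ω t)) + ε) ha' (hs3 ε hεδ) hxb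
    have hgε : ∀ l, yhat l a' (ω t) + g l ((fun m => xhat m a' (ω t)) + ε)
        ≤ -δ + s * βsum := by
      intro l
      have h1 := hglip l (fun m => xhat m a' (ω t)) ε (fun m => hA1x _ _ ha' m) hxb
      have h2 : ∑ m, β l m * |ε m| = (∑ m, β l m) * s := by
        rw [Finset.sum_mul]; exact Finset.sum_congr rfl fun m _ => by rw [hε]
      have h3 := mul_le_mul_of_nonneg_right (hβle l) hs0
      have h4 := hs1 l
      rw [h2] at h1; linarith
    have f1 : ∑ l, Z l t * (yhat l a' (ω t) + g l ((fun m => xhat m a' (ω t)) + ε))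
        + (∑ l, Z l t * εZ) ≤ -(θ * ∑ l, Z l t) := by
      rw [← Finset.sum_add_distrib, Finset.mul_sum, ← Finset.sum_neg_distrib]
      refine Finset.sum_le_sum fun l _ => ?_
      have h : yhat l a' (ω t) + g l ((fun m => xhat m a' (ω t)) + ε) + εZ ≤ -θ := by
        have := hgε l
        rw [hs] at this; linarith
      have := mul_le_mul_of_nonneg_left h (hZn l t)
      linarith
    have f2 : ∑ k, Q k t * (ahat k a' (ω t) - bhat k a' (ω t))
        + (∑ k, Q k t * εQ) ≤ -(θ * ∑ k, Q k t) := by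
      rw [← Finset.sum_add_distrib, Finset.mul_sum, ← Finset.sum_neg_distrib]
      refine Finset.sum_le_sum fun k _ => ?_
      have h : ahat k a' (ω t) - bhat k a' (ω t) + εQ ≤ -θ := by
        have := hs2 k
        linarith
      have := mul_le_mul_of_nonneg_left h (hQn k t)
      linarith
    have f3 : ∑ m, H m t * (((fun m => xhat m a' (ω t)) + ε) m - xhat m a' (ω t))
        + (∑ m, |H m t| * εH) ≤ -(θ * ∑ m, |H m t|) := by
      rw [← Finset.sum_add_distrib, Finset.mul_sum, ← Finset.sum_neg_distrib]
      refine Finset.sum_le_sum fun m _ => ?_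
      have h1 : ((fun m => xhat m a' (ω t)) + ε) m - xhat m a' (ω t) = ε m := by
        simp
      rw [h1, hHε, hs]; linarith
    have e6 := hCt t
    have v1 := mul_le_mul_of_nonneg_left (hA1y0 _ _ ha').2 hV.le
    have v2 := mul_le_mul_of_nonneg_left (hA1y0 _ _ (hα t)).1 hV.le
    have v3 := mul_le_mul_of_nonneg_left (hfbd ((fun m => xhat m a' (ω t)) + ε) hxb).2 hV.le
    have v4 := mul_le_mul_of_nonneg_left (hfbd _ (hγbox t)).1 hV.le
    unfold driftExpr at e5
    rw [hVc]
    linarith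
  -- one-step increment bound
  have step : ∀ t, (∑ l, Z l (t+1) ^ 2) + (∑ k, Q k (t+1) ^ 2) + (∑ m, H m (t+1) ^ 2)
      ≤ (∑ l, Z l t ^ 2) + (∑ k, Q k t ^ 2) + (∑ m, H m t ^ 2)
        + 2 * D + 2 * (zmax * ((∑ l, Z l t) + (∑ k, Q k t) + (∑ m, |H m t|))) := by
    intro t
    have e0 := hD t _ _ (hα t) (hγX t) (hγbox t)
    have e1 : (∑ l, Z l (t+1) ^ 2) ≤ (∑ l, Z l t ^ 2)
        + (∑ l, max (|ymax l + gmax l|) (|ymin l + gmin l|)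
          * |yhat l (α t) (ω t) + g l (γ t)|)
        + 2 * (zmax * ∑ l, Z l t) := by
      rw [Finset.mul_sum, Finset.mul_sum, ← Finset.sum_add_distrib, ← Finset.sum_add_distrib]
      refine Finset.sum_le_sum fun l _ => ?_
      rw [hZ, add_assoc]; exact z_step _ _ _ _ (hZn l t) (hdl t l) (hzl l)
    have e2 : (∑ k, Q k (t+1) ^ 2) ≤ (∑ k, Q k t ^ 2)
        + (∑ k, max (bmax k) (amax k)
          * max (bhat k (α t) (ω t)) (ahat k (α t) (ω t)))
        + 2 * (zmax * ∑ k, Q k t) := by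
      rw [Finset.mul_sum, Finset.mul_sum, ← Finset.sum_add_distrib, ← Finset.sum_add_distrib]
      refine Finset.sum_le_sum fun k _ => ?_
      rw [hQ]
      exact q_step _ _ _ _ _ (hQn k t) (hA1a _ _ (hα t) k).1 (hA1b _ _ (hα t) k).1
        (hdk t k) (hzk k)
    have e3 : (∑ m, H m (t+1) ^ 2) ≤ (∑ m, H m t ^ 2)
        + 2 * (∑ m, (xmax m - xmin m) * |xhat m (α t) (ω t) - γ t m|)
        + 2 * (zmax * ∑ m, |H m t|) := by
      rw [Finset.mul_sum, Finset.mul_sum, Finset.mul_sum, ← Finset.sum_add_distrib,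
        ← Finset.sum_add_distrib]
      refine Finset.sum_le_sum fun m _ => ?_
      rw [hH, add_sub_assoc, abs_sub_comm]
      exact h_step _ _ _ _ (by rw [abs_sub_comm]; exact hdm t m) (hzm m)
    linarith
  set R : ℝ := V * c / θ with hR
  have hR0 : 0 ≤ R := by positivity
  have hθR : θ * R = V * c := by rw [hR]; field_simp
  have inv : ∀ t, (∑ l, Z l t ^ 2) + (∑ k, Q k t ^ 2) + (∑ m, H m t ^ 2)
      ≤ R ^ 2 + 2 * D + 2 * (zmax * R) := by
    intro t
    induction t with
    | zero =>
      simp only [hZ0, hQ0, hH0]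
      simp
      positivity
    | succ t ih =>
      rcases le_total ((∑ l, Z l t) + (∑ k, Q k t) + (∑ m, |H m t|)) R with h | h
      · have h1 := step t
        have h2 := mul_le_mul_of_nonneg_left h hz0
        have z1 := sum_sq_le _ (fun l => hZn l t)
        have z2 := sum_sq_le _ (fun k => hQn k t)
        have z3 := sum_sq_le _ (fun m => abs_nonneg (H m t))
        simp only [sq_abs] at z3
        have p1 : 0 ≤ ∑ l, Z l t := Finset.sum_nonneg fun l _ => hZn l t
        have p2 : 0 ≤ ∑ k, Q k t := Finset.sum_nonneg fun k _ => hQn k t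
        have p3 : 0 ≤ ∑ m, |H m t| := Finset.sum_nonneg fun m _ => abs_nonneg _
        have h3 := pow_le_pow_left₀ (add_nonneg (add_nonneg p1 p2) p3) h 2
        have := mul_nonneg p1 p2
        have := mul_nonneg p1 p3
        have := mul_nonneg p2 p3
        linarith
      · have h1 := drift t
        have h2 := mul_le_mul_of_nonneg_left h hθ0.le
        linarith
  have hDs : 0 ≤ D₁ + D₂ + D₃ := by
    rw [hD₁, hD₂, hD₃, hsq]; positivity
  have hfin : (V * C₃ / θ) ^ 2 = R ^ 2 + 2 * D + 2 * (zmax * R) := by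
    rw [div_pow, mul_pow, hC₃, Real.sq_sqrt hDs, hD₃, hsq, hD₁, hD₂, hR]
    field_simp
  have hfin0 : 0 ≤ V * C₃ / θ := by
    rw [hC₃]; positivity
  intro t
  have hi := inv t
  rw [← hfin] at hi
  have p1 : 0 ≤ ∑ l, Z l t ^ 2 := Finset.sum_nonneg fun l _ => sq_nonneg _
  have p2 : 0 ≤ ∑ k, Q k t ^ 2 := Finset.sum_nonneg fun k _ => sq_nonneg _
  have p3 : 0 ≤ ∑ m, H m t ^ 2 := Finset.sum_nonneg fun m _ => sq_nonneg _
  refine ⟨fun k => ?_, fun l => ?_, fun m => ?_⟩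
  · have := Finset.single_le_sum (f := fun k => Q k t ^ 2) (fun i _ => sq_nonneg _)
      (Finset.mem_univ k)
    exact le_of_sq_le_sq_aux (by linarith) hfin0
  · have := Finset.single_le_sum (f := fun l => Z l t ^ 2) (fun i _ => sq_nonneg _)
      (Finset.mem_univ l)
    exact le_of_sq_le_sq_aux (by linarith) hfin0
  · have := Finset.single_le_sum (f := fun m => H m t ^ 2) (fun i _ => sq_nonneg _)
      (Finset.mem_univ m)
    exact abs_le_of_sq_le_sq (by linarith) hfin0
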